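/- Set K_c^{(2)}(β) := 1/(4βe^{−β}) + 1/(2β). (i) If 0 < β < log 4 and K = K_c^{(2)}(β), then as n → ∞ the distributions of S_n/n^{3/4} under P_{n,β,K} converge weakly to the probability distribution on ℝ with density proportional to exp(−G_{β,K}^{(4)}(0) x⁴/4!), where G_{β,K}^{(4)}(0) = −(2βK)⁴ c_β^{(4)}(0) > 0. (ii) If β = log 4 and K = K_c^{(2)}(β), then as n → ∞ the distributions of S_n/n^{5/6} under P_{n,β,K} converge weakly to the probability distribution on ℝ with density proportional to exp(−G_{β,K}^{(6)}(0) x⁶/6!), where G_{β,K}^{(6)}(0) = 2(2βK)⁶/9. -/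

import Mathlib

noncomputable section

open scoped BigOperators

/-- `c_β(t) = log[(1 + e^{−β}(e^t + e^{−t}))/(1 + 2e^{−β})]`. -/
def cBeta (β t : ℝ) : ℝ :=
  Real.log ((1 + Real.exp (-β) * (Real.exp t + Real.exp (-t))) / (1 + 2 * Real.exp (-β)))

/-- `G_{β,K}(z) = βK z² − c_β(2βK z)`. -/
def Gfun (β K z : ℝ) : ℝ := β * K * z ^ 2 - cBeta β (2 * β * K * z)

/-- The spin space `Λ = {-1, 0, 1} ⊆ ℤ`. -/
abbrev Spin : Type := ({-1, 0, 1} : Finset ℤ)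

/-- The total spin `S_n(ω) = Σ_j ω_j` (as a real number). -/
def totalSpin (n : ℕ) (ω : Fin n → Spin) : ℝ := ∑ j, ((ω j : ℤ) : ℝ)

/-- The energy `H_{n,K}(ω) = Σ_j ω_j² − (K/n)(Σ_j ω_j)²`. -/
def ham (K : ℝ) (n : ℕ) (ω : Fin n → Spin) : ℝ :=
  (∑ j, ((ω j : ℤ) : ℝ) ^ 2) - (K / n) * (∑ j, ((ω j : ℤ) : ℝ)) ^ 2

/-- The canonical ensemble `P_{n,β,K}`: the probability mass of a configuration
`ω ∈ Λⁿ` is proportional to `exp(−β H_{n,K}(ω))`. -/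
def canonP (β K : ℝ) (n : ℕ) (ω : Fin n → Spin) : ℝ :=
  Real.exp (-β * ham K n ω) / ∑ ω' : Fin n → Spin, Real.exp (-β * ham K n ω')

/-- The second-order critical value `K_c^{(2)}(β) = 1/(4βe^{−β}) + 1/(2β)`. -/
def Kc2 (β : ℝ) : ℝ := 1 / (4 * β * Real.exp (-β)) + 1 / (2 * β)

def Dn (β t : ℝ) : ℝ := 1 + Real.exp (-β) * (Real.exp t + Real.exp (-t))
def uu (β t : ℝ) : ℝ := Real.exp (-β) * (Real.exp t - Real.exp (-t)) / Dn β t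
def ww (β t : ℝ) : ℝ := Real.exp (-β) * (Real.exp t + Real.exp (-t)) / Dn β t

lemma Dn_pos (β t : ℝ) : 0 < Dn β t := by unfold Dn; positivity

lemma hasDerivAt_Dn (β t : ℝ) :
    HasDerivAt (Dn β) (Real.exp (-β) * (Real.exp t - Real.exp (-t))) t := by
  have h1 := Real.hasDerivAt_exp t
  have h2 : HasDerivAt (fun t : ℝ => Real.exp (-t)) (-Real.exp (-t)) t := by
    simpa using (hasDerivAt_neg t).exp
  have h := ((h1.fun_add h2).const_mul (Real.exp (-β))).const_add 1
  refine HasDerivAt.congr_deriv (f := Dn β) h ?_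
  ring

lemma hasDerivAt_uu (β t : ℝ) : HasDerivAt (uu β) (ww β t - uu β t ^ 2) t := by
  have h1 := Real.hasDerivAt_exp t
  have h2 : HasDerivAt (fun t : ℝ => Real.exp (-t)) (-Real.exp (-t)) t := by
    simpa using (hasDerivAt_neg t).exp
  have h := ((h1.fun_sub h2).const_mul (Real.exp (-β))).div (hasDerivAt_Dn β t) (Dn_pos β t).ne'
  refine HasDerivAt.congr_deriv (f := uu β) h ?_
  have := (Dn_pos β t).ne'
  simp only [uu, ww]
  field_simp
  ring

lemma hasDerivAt_ww (β t : ℝ) : HasDerivAt (ww β) (uu β t - uu β t * ww β t) t := by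
  have h1 := Real.hasDerivAt_exp t
  have h2 : HasDerivAt (fun t : ℝ => Real.exp (-t)) (-Real.exp (-t)) t := by
    simpa using (hasDerivAt_neg t).exp
  have h := ((h1.fun_add h2).const_mul (Real.exp (-β))).div (hasDerivAt_Dn β t) (Dn_pos β t).ne'
  refine HasDerivAt.congr_deriv (f := ww β) h ?_
  have := (Dn_pos β t).ne'
  simp only [uu, ww]
  field_simp
  ring

lemma cBeta_eq (β t : ℝ) : cBeta β t = Real.log (Dn β t / (1 + 2 * Real.exp (-β))) := rfl

lemma hasDerivAt_cBeta (β t : ℝ) : HasDerivAt (cBeta β) (uu β t) t := by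
  have hp : 0 < 1 + 2 * Real.exp (-β) := by positivity
  have h := ((hasDerivAt_Dn β t).div_const (1 + 2 * Real.exp (-β))).log
    (div_pos (Dn_pos β t) hp).ne'
  refine HasDerivAt.congr_deriv (f := cBeta β) h ?_
  have := (Dn_pos β t).ne'
  simp only [uu]
  field_simp

lemma contDiff_cBeta (β : ℝ) (n : ℕ) : ContDiff ℝ n (cBeta β) := by
  have hp : 0 < 1 + 2 * Real.exp (-β) := by positivity
  unfold cBeta
  apply ContDiff.log
  · fun_prop
  · intro x; have := Dn_pos β x; unfold Dn at this; positivity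

lemma iter1 (β : ℝ) : iteratedDeriv 1 (cBeta β) = uu β := by
  rw [iteratedDeriv_one]; funext t; exact (hasDerivAt_cBeta β t).deriv

lemma iter2 (β : ℝ) : iteratedDeriv 2 (cBeta β) = fun t => ww β t - uu β t ^ 2 := by
  rw [iteratedDeriv_succ, iter1]; funext t; exact (hasDerivAt_uu β t).deriv

lemma iter3 (β : ℝ) : iteratedDeriv 3 (cBeta β) =
    fun t => uu β t - 3 * (uu β t * ww β t) + 2 * uu β t ^ 3 := by
  rw [iteratedDeriv_succ, iter2]; funext t
  have hu := hasDerivAt_uu β t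
  have hw := hasDerivAt_ww β t
  refine ((hw.sub (hu.fun_pow 2)).congr_deriv ?_).deriv
  simp; ring

lemma iter4 (β : ℝ) : iteratedDeriv 4 (cBeta β) =
    fun t => ww β t - 4 * uu β t ^ 2 - 3 * ww β t ^ 2 + 12 * (uu β t ^ 2 * ww β t)
      - 6 * uu β t ^ 4 := by
  rw [iteratedDeriv_succ, iter3]; funext t
  have hu := hasDerivAt_uu β t
  have hw := hasDerivAt_ww β t
  refine (((hu.fun_sub ((hu.fun_mul hw).const_mul 3)).fun_add
    ((hu.fun_pow 3).const_mul 2)).congr_deriv ?_).deriv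
  simp; ring

lemma iter5 (β : ℝ) : iteratedDeriv 5 (cBeta β) =
    fun t => uu β t - 15 * (uu β t * ww β t) + 20 * uu β t ^ 3 + 30 * (uu β t * ww β t ^ 2)
      - 60 * (uu β t ^ 3 * ww β t) + 24 * uu β t ^ 5 := by
  rw [iteratedDeriv_succ, iter4]; funext t
  have hu := hasDerivAt_uu β t
  have hw := hasDerivAt_ww β t
  refine (((((hw.fun_sub ((hu.fun_pow 2).const_mul 4)).fun_sub ((hw.fun_pow 2).const_mul 3)).fun_add
    (((hu.fun_pow 2).fun_mul hw).const_mul 12)).fun_sub ((hu.fun_pow 4).const_mul 6)).congr_deriv ?_).deriv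
  simp; ring

lemma uu_zero (β : ℝ) : uu β 0 = 0 := by simp [uu]

lemma iter6 (β : ℝ) : iteratedDeriv 6 (cBeta β) 0 =
    ww β 0 - 15 * ww β 0 ^ 2 + 30 * ww β 0 ^ 3 := by
  rw [iteratedDeriv_succ, iter5]
  have hu := hasDerivAt_uu β 0
  have hw := hasDerivAt_ww β 0
  refine ((((((hu.fun_sub ((hu.fun_mul hw).const_mul 15)).fun_add ((hu.fun_pow 3).const_mul 20)).fun_add
    ((hu.fun_mul (hw.fun_pow 2)).const_mul 30)).fun_sub (((hu.fun_pow 3).fun_mul hw).const_mul 60)).fun_add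
      ((hu.fun_pow 5).const_mul 24)).congr_deriv ?_).deriv
  simp [uu_zero]; ring

lemma iterG (β K : ℝ) (n : ℕ) : iteratedDeriv n (Gfun β K) 0 =
    iteratedDeriv n (fun z : ℝ => β * K * z ^ 2) 0
      - (2 * β * K) ^ n * iteratedDeriv n (cBeta β) 0 := by
  unfold Gfun
  have h1 : ContDiff ℝ n (fun z : ℝ => cBeta β (2 * β * K * z)) :=
    (contDiff_cBeta β n).comp (by fun_prop)
  rw [iteratedDeriv_fun_sub (by fun_prop) h1.contDiffAt,
    iteratedDeriv_comp_const_mul (contDiff_cBeta β n)]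
  simp

lemma contDiff_G (β K : ℝ) (n : ℕ) : ContDiff ℝ n (Gfun β K) := by
  have h1 : ContDiff ℝ n (fun z : ℝ => cBeta β (2 * β * K * z)) :=
    (contDiff_cBeta β n).comp (by fun_prop)
  unfold Gfun
  exact ContDiff.sub (by fun_prop) h1

lemma iq1 (a : ℝ) : iteratedDeriv 1 (fun z : ℝ => a * z ^ 2) = fun z => 2 * a * z := by
  rw [iteratedDeriv_one]; funext z
  refine (((hasDerivAt_id z).pow 2).const_mul a |>.congr_deriv ?_).deriv
  simp; ring
lemma iq2 (a : ℝ) : iteratedDeriv 2 (fun z : ℝ => a * z ^ 2) = fun _ => 2 * a := by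
  rw [iteratedDeriv_succ, iq1]; funext z
  refine (((hasDerivAt_id z)).const_mul (2 * a) |>.congr_deriv ?_).deriv
  simp
lemma iq3 (a : ℝ) (n : ℕ) : iteratedDeriv (n + 3) (fun z : ℝ => a * z ^ 2) = fun _ => 0 := by
  induction n with
  | zero => rw [zero_add, iteratedDeriv_succ, iq2]; funext z; simp
  | succ n ih => rw [show n + 1 + 3 = (n + 3) + 1 by ring, iteratedDeriv_succ, ih]; funext z; simp

/-- Taylor expansion. -/
lemma taylorG (β K L : ℝ) (m : ℕ)
    (h0 : ∀ k < m, iteratedDeriv k (Gfun β K) 0 = 0)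
    (hL : L = iteratedDeriv m (Gfun β K) 0 / (m.factorial : ℝ)) :
    (fun z => Gfun β K z - L * z ^ m) =o[nhds 0] fun z : ℝ => z ^ m := by
  have h := taylor_isLittleO_univ (x₀ := 0) (contDiff_G β K m)
  simp only [taylor_within_apply, Finset.sum_range_succ, iteratedDerivWithin_univ, sub_zero] at h
  refine h.congr (fun z => ?_) (fun _ => rfl)
  rw [Finset.sum_eq_zero, hL]
  · simp; ring
  · intro k hk; rw [h0 k (Finset.mem_range.1 hk)]; simp

lemma Kc_val (β : ℝ) (hβ : 0 < β) : 2 * β * Kc2 β = 1 / ww β 0 := by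
  unfold Kc2 ww Dn
  have := Real.exp_pos (-β)
  simp
  field_simp
  ring

lemma ww_zero (β : ℝ) : ww β 0 = 2 * Real.exp (-β) / (1 + 2 * Real.exp (-β)) := by
  unfold ww Dn; simp; ring_nf

lemma ww_pos (β : ℝ) : 0 < ww β 0 := by rw [ww_zero]; positivity

lemma iterG_small (β : ℝ) (hβ : 0 < β) : ∀ k < 4, iteratedDeriv k (Gfun β (Kc2 β)) 0 = 0 := by
  intro k hk
  have hw := ww_pos β
  have hA := Kc_val β hβ
  rw [iterG]
  interval_cases k
  · simp [cBeta]; right; left; norm_num; rw [mul_comm, div_self (by positivity)]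
  · rw [iq1, iter1]; simp [uu_zero]
  · rw [iq2, iter2, hA, show 2 * (β * Kc2 β) = 2 * β * Kc2 β by ring, hA]; simp [uu_zero]; field_simp; simp
  · rw [iq3 _ 0, iter3]; simp [uu_zero]

lemma iterG4 (β K : ℝ) : iteratedDeriv 4 (Gfun β K) 0 =
    - (2 * β * K) ^ 4 * iteratedDeriv 4 (cBeta β) 0 := by
  rw [iterG, iq3 _ 1]; ring

lemma iterG4' (β K : ℝ) : iteratedDeriv 4 (Gfun β K) 0 =
    (2 * β * K) ^ 4 * ww β 0 * (3 * ww β 0 - 1) := by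
  rw [iterG4, iter4]; simp [uu_zero]; ring

lemma iterG5 (β K : ℝ) : iteratedDeriv 5 (Gfun β K) 0 = 0 := by
  rw [iterG, iq3 _ 2, iter5]; simp [uu_zero]

lemma iterG6 (β K : ℝ) : iteratedDeriv 6 (Gfun β K) 0 =
    - (2 * β * K) ^ 6 * (ww β 0 - 15 * ww β 0 ^ 2 + 30 * ww β 0 ^ 3) := by
  rw [iterG, iq3 _ 3, iter6]; ring

lemma nonneg_of_deriv (f f' : ℝ → ℝ) (hf : ∀ t, HasDerivAt f (f' t) t) (h0 : f 0 = 0)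
    (h : ∀ t, 0 ≤ t → 0 ≤ f' t) : ∀ t, 0 ≤ t → 0 ≤ f t := by
  intro t ht
  have hm : MonotoneOn f (Set.Ici 0) := by
    apply monotoneOn_of_deriv_nonneg (convex_Ici 0)
    · exact fun x _ => (hf x).continuousAt.continuousWithinAt
    · exact fun x _ => (hf x).differentiableAt.differentiableWithinAt
    · intro x hx
      rw [(hf x).deriv]
      simp at hx
      exact h x hx.le
  have := hm (Set.mem_Ici.2 le_rfl) (Set.mem_Ici.2 ht) ht
  rwa [h0] at this

lemma sinh_ineq0 : ∀ t : ℝ, 0 ≤ t → 0 ≤ t * Real.cosh t - Real.sinh t := by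
  apply nonneg_of_deriv _ (fun t => t * Real.sinh t)
  · intro t
    refine (((hasDerivAt_id t).fun_mul (Real.hasDerivAt_cosh t)).fun_sub
      (Real.hasDerivAt_sinh t)).congr_deriv ?_
    simp
  · simp
  · intro t ht
    exact mul_nonneg ht (Real.sinh_nonneg_iff.2 ht)

lemma sinh_ineq1 : ∀ t : ℝ, 0 ≤ t → 0 ≤ 2 + t * Real.sinh t - 2 * Real.cosh t := by
  apply nonneg_of_deriv _ (fun t => t * Real.cosh t - Real.sinh t)
  · intro t
    refine ((((hasDerivAt_id t).fun_mul (Real.hasDerivAt_sinh t)).const_add 2).fun_sub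
      ((Real.hasDerivAt_cosh t).const_mul 2)).congr_deriv ?_
    simp; ring
  · simp
  · exact sinh_ineq0

lemma sinh_ineq2 : ∀ t : ℝ, 0 ≤ t → 0 ≤ 2 * t + t * Real.cosh t - 3 * Real.sinh t := by
  apply nonneg_of_deriv _ (fun t => 2 + t * Real.sinh t - 2 * Real.cosh t)
  · intro t
    refine ((((hasDerivAt_id t).const_mul 2).fun_add ((hasDerivAt_id t).fun_mul
      (Real.hasDerivAt_cosh t))).fun_sub
      ((Real.hasDerivAt_sinh t).const_mul 3)).congr_deriv ?_
    simp; ring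
  · simp
  · exact sinh_ineq1

lemma uu_le (β t : ℝ) (hq : 1 / 4 ≤ Real.exp (-β)) (ht : 0 ≤ t) : uu β t ≤ ww β 0 * t := by
  rw [ww_zero]
  unfold uu
  rw [div_le_iff₀ (Dn_pos β t), div_mul_eq_mul_div, div_mul_eq_mul_div,
    le_div_iff₀ (by positivity)]
  unfold Dn
  have h1 := sinh_ineq0 t ht
  have h2 := sinh_ineq2 t ht
  have es : Real.exp t - Real.exp (-t) = 2 * Real.sinh t := by rw [Real.sinh_eq]; ring
  have ec : Real.exp t + Real.exp (-t) = 2 * Real.cosh t := by rw [Real.cosh_eq]; ring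
  rw [es, ec]
  set q := Real.exp (-β)
  have h3 : 0 ≤ (q - 1 / 4) * (t * Real.cosh t - Real.sinh t) :=
    mul_nonneg (by linarith) h1
  have h4 : Real.sinh t * (1 + 2 * q) ≤ t * (1 + q * (2 * Real.cosh t)) := by nlinarith
  have hq0 : 0 ≤ 2 * q := by linarith
  have := mul_le_mul_of_nonneg_left h4 hq0
  nlinarith

lemma hasDerivAt_G (β K z : ℝ) : HasDerivAt (Gfun β K)
    (2 * β * K * (z - uu β (2 * β * K * z))) z := by
  have h1 := (hasDerivAt_cBeta β (2 * β * K * z)).comp z ((hasDerivAt_id z).const_mul (2 * β * K))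
  have h2 := ((hasDerivAt_id z).fun_pow 2).const_mul (β * K)
  refine HasDerivAt.congr_deriv (f := Gfun β K) (h2.fun_sub h1) ?_
  simp; ring

lemma G_mono (β K : ℝ) (hq : 1 / 4 ≤ Real.exp (-β)) (hA : 2 * β * K = 1 / ww β 0) :
    MonotoneOn (Gfun β K) (Set.Ici 0) := by
  have hw := ww_pos β
  apply monotoneOn_of_deriv_nonneg (convex_Ici 0)
  · exact fun x _ => (hasDerivAt_G β K x).continuousAt.continuousWithinAt
  · exact fun x _ => (hasDerivAt_G β K x).differentiableAt.differentiableWithinAt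
  · intro x hx
    rw [(hasDerivAt_G β K x).deriv, hA]
    simp at hx
    have := uu_le β (1 / ww β 0 * x) hq (by positivity)
    have e : ww β 0 * (1 / ww β 0 * x) = x := by field_simp
    rw [e] at this
    exact mul_nonneg (by positivity) (by linarith)

lemma G_even (β K z : ℝ) : Gfun β K (-z) = Gfun β K z := by
  unfold Gfun cBeta; simp [add_comm]

lemma G_abs (β K z : ℝ) : Gfun β K |z| = Gfun β K z := by
  rcases abs_choice z with h | h <;> rw [h]
  exact G_even β K z

lemma cBeta_le (β t : ℝ) : cBeta β t ≤ |t| := by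
  rw [cBeta_eq, Real.log_le_iff_le_exp (div_pos (Dn_pos β t) (by positivity)),
    div_le_iff₀ (by positivity)]
  unfold Dn
  have h1 : Real.exp t ≤ Real.exp |t| := Real.exp_le_exp.2 (le_abs_self t)
  have h2 : Real.exp (-t) ≤ Real.exp |t| := Real.exp_le_exp.2 (neg_le_abs t)
  have h3 : 1 ≤ Real.exp |t| := Real.one_le_exp (abs_nonneg t)
  have h4 := Real.exp_pos (-β)
  nlinarith

lemma boundG (β K L : ℝ) (m : ℕ) (hm : Even m) (hq : 1 / 4 ≤ Real.exp (-β))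
    (hA : 2 * β * K = 1 / ww β 0) (hL : 0 < L)
    (ho : (fun z => Gfun β K z - L * z ^ m) =o[nhds 0] fun z : ℝ => z ^ m) :
    ∃ c > 0, ∀ z, c * min (z ^ m) (z ^ 2) ≤ Gfun β K z := by
  have hw := ww_pos β
  have hApos : 0 < 2 * β * K := by rw [hA]; positivity
  have h1 := ho.def (half_pos hL)
  obtain ⟨δ, hδ, h1⟩ := Metric.eventually_nhds_iff.1 h1
  have near : ∀ z, |z| < δ → L / 2 * z ^ m ≤ Gfun β K z := by
    intro z hz
    have := h1 (y := z) (by simpa using hz)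
    rw [Real.norm_eq_abs, Real.norm_eq_abs, abs_of_nonneg (hm.pow_nonneg z)] at this
    have := (abs_le.1 this).1
    linarith
  set d := δ / 2 with hd
  have hdpos : 0 < d := by positivity
  have hdm : 0 < d ^ m := by positivity
  refine ⟨min (L / 2) (min (β * K / 2) (L / 2 * d ^ m / 16)), ?_, ?_⟩
  · have : 0 < β * K := by linarith
    exact lt_min (by positivity) (lt_min (by positivity) (by positivity))
  intro z
  set c := min (L / 2) (min (β * K / 2) (L / 2 * d ^ m / 16)) with hc
  have hc1 : c ≤ L / 2 := min_le_left _ _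
  have hc2 : c ≤ β * K / 2 := (min_le_right _ _).trans (min_le_left _ _)
  have hc3 : c ≤ L / 2 * d ^ m / 16 := (min_le_right _ _).trans (min_le_right _ _)
  have hc0 : 0 < c := by
    have : 0 < β * K := by linarith
    exact lt_min (by positivity) (lt_min (by positivity) (by positivity))
  by_cases hz : |z| < δ
  · refine le_trans ?_ (near z hz)
    have := hm.pow_nonneg z
    calc c * min (z ^ m) (z ^ 2) ≤ c * z ^ m := by gcongr; exact min_le_left _ _
      _ ≤ _ := by gcongr
  push Not at hz
  have step : c * min (z ^ m) (z ^ 2) ≤ c * |z| ^ 2 := by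
    rw [sq_abs]; gcongr; exact min_le_right _ _
  refine step.trans ?_
  by_cases h4 : |z| ≤ 4
  · have hmono := G_mono β K hq hA (Set.mem_Ici.2 hdpos.le) (Set.mem_Ici.2 (abs_nonneg z))
      (by linarith : d ≤ |z|)
    rw [G_abs] at hmono
    have h5 := near d (by rw [abs_of_pos hdpos]; linarith)
    have h6 : |z| ^ 2 ≤ 16 := by nlinarith [abs_nonneg z]
    nlinarith
  · push Not at h4
    have h5 := cBeta_le β (2 * β * K * z)
    rw [abs_mul, abs_of_pos hApos] at h5
    unfold Gfun
    rw [← sq_abs z]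
    have h6 : c * |z| ^ 2 ≤ β * K / 2 * |z| ^ 2 := by gcongr
    have h7 : 0 ≤ β * K * (|z| * (|z| - 4)) :=
      mul_nonneg (by linarith) (mul_nonneg (abs_nonneg z) (by linarith))
    nlinarith

lemma sum_spin_exp (β t : ℝ) (n : ℕ) :
    ∑ ω : Fin n → Spin, Real.exp (-β * ∑ j, ((ω j : ℤ) : ℝ) ^ 2) * Real.exp (t * totalSpin n ω)
      = Dn β t ^ n := by
  have h1 : ∀ ω : Fin n → Spin,
      Real.exp (-β * ∑ j, ((ω j : ℤ) : ℝ) ^ 2) * Real.exp (t * totalSpin n ω)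
      = ∏ j, Real.exp (-β * ((ω j : ℤ) : ℝ) ^ 2 + t * ((ω j : ℤ) : ℝ)) := by
    intro ω
    rw [← Real.exp_sum, ← Real.exp_add, Finset.sum_add_distrib, Finset.mul_sum, totalSpin,
      Finset.mul_sum]
  have h2 : ∑ s : Spin, Real.exp (-β * ((s : ℤ) : ℝ) ^ 2 + t * ((s : ℤ) : ℝ)) = Dn β t := by
    rw [Finset.sum_coe_sort ({-1, 0, 1} : Finset ℤ)
      (fun s : ℤ => Real.exp (-β * (s : ℝ) ^ 2 + t * (s : ℝ)))]
    rw [Finset.sum_insert (by decide), Finset.sum_insert (by decide), Finset.sum_singleton]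
    unfold Dn
    simp [Real.exp_add]
    ring
  simp_rw [h1]
  rw [← h2, ← Fintype.piFinset_univ, ← Finset.prod_univ_sum (fun _ : Fin n => Finset.univ)
    (fun _ (s : Spin) => Real.exp (-β * ((s : ℤ) : ℝ) ^ 2 + t * ((s : ℤ) : ℝ)))]
  simp

lemma exp_G (β K : ℝ) (n : ℕ) (z : ℝ) :
    Real.exp (-(n * Gfun β K z)) = ((1 + 2 * Real.exp (-β)) ^ n)⁻¹ *
      ∑ ω : Fin n → Spin, Real.exp (-β * ∑ j, ((ω j : ℤ) : ℝ) ^ 2) *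
        Real.exp (2 * β * K * z * totalSpin n ω - n * (β * K) * z ^ 2) := by
  have h : ∀ ω : Fin n → Spin, Real.exp (-β * ∑ j, ((ω j : ℤ) : ℝ) ^ 2) *
        Real.exp (2 * β * K * z * totalSpin n ω - n * (β * K) * z ^ 2) =
      (Real.exp (-β * ∑ j, ((ω j : ℤ) : ℝ) ^ 2) * Real.exp (2 * β * K * z * totalSpin n ω)) *
        Real.exp (-(n * (β * K) * z ^ 2)) := by
    intro ω; simp only [← Real.exp_add]; congr 1; ring
  simp_rw [h]
  rw [← Finset.sum_mul, sum_spin_exp, Gfun, cBeta_eq]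
  have hp := div_pos (Dn_pos β (2 * β * K * z)) (by positivity : 0 < 1 + 2 * Real.exp (-β))
  rw [show -((n : ℝ) * (β * K * z ^ 2 - Real.log (Dn β (2 * β * K * z) / (1 + 2 * Real.exp (-β)))))
    = n * Real.log (Dn β (2 * β * K * z) / (1 + 2 * Real.exp (-β))) + -(n * (β * K) * z ^ 2) by ring,
    Real.exp_add, Real.exp_nat_mul, Real.exp_log hp, div_pow]
  ring

def spinNum (β K : ℝ) (n : ℕ) (r u : ℝ) : ℂ :=
  ∑ ω : Fin n → Spin, (Real.exp (-β * ham K n ω) : ℂ) *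
    Complex.exp (u * (totalSpin n ω * r / n : ℝ) * Complex.I)

lemma HS (β K : ℝ) (n : ℕ) (r : ℝ) (hn : 0 < n) (hr : 0 < r) (hK : 0 < β * K) :
    ∃ C : ℂ, C ≠ 0 ∧ ∀ u : ℝ,
      ∫ x : ℝ, Complex.exp (u * x * Complex.I) * (Real.exp (-(n * Gfun β K (x / r))) : ℂ) =
        C * Complex.exp (-(u ^ 2 * (r ^ 2 / n) / (4 * (β * K)) : ℝ)) * spinNum β K n r u := by
  have hn' : (0 : ℝ) < n := by exact_mod_cast hn
  set b : ℂ := ((-(n * (β * K) / r ^ 2) : ℝ) : ℂ) with hb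
  have hbneg : -(n * (β * K) / r ^ 2) < 0 := by
    rw [neg_lt_zero]; positivity
  have hbre : b.re < 0 := by rw [hb, Complex.ofReal_re]; exact hbneg
  have hb0 : b ≠ 0 := by rw [hb]; exact_mod_cast hbneg.ne
  set D : ℂ := ((((1 + 2 * Real.exp (-β)) ^ n)⁻¹ : ℝ) : ℂ) with hD
  have hD0 : D ≠ 0 := by
    rw [hD]; exact_mod_cast (by positivity : ((1 + 2 * Real.exp (-β)) ^ n)⁻¹ ≠ 0)
  refine ⟨D * (Real.pi / -b) ^ (1 / 2 : ℂ), ?_, ?_⟩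
  · refine mul_ne_zero hD0 ?_
    rw [Complex.cpow_ne_zero_iff]
    left
    exact div_ne_zero (by exact_mod_cast Real.pi_ne_zero) (neg_ne_zero.2 hb0)
  intro u
  have key : ∀ x : ℝ, Complex.exp (u * x * Complex.I) *
      (Real.exp (-(n * Gfun β K (x / r))) : ℂ) =
      ∑ ω : Fin n → Spin, (D * (Real.exp (-β * ∑ j, ((ω j : ℤ) : ℝ) ^ 2) : ℂ)) *
        Complex.exp (b * x ^ 2 +
          ((2 * β * K * totalSpin n ω / r : ℝ) + u * Complex.I) * x + 0) := by
    intro x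
    rw [exp_G, Complex.ofReal_mul, Complex.ofReal_sum, ← hD, Finset.mul_sum, Finset.mul_sum]
    refine Finset.sum_congr rfl fun ω _ => ?_
    rw [Complex.ofReal_mul, Complex.ofReal_exp (2 * β * K * (x / r) * _ - _)]
    rw [show ∀ a b c d : ℂ, a * (b * (c * d)) = b * c * (a * d) by intros; ring, ← Complex.exp_add]
    congr 2
    rw [hb]
    push_cast
    have : (r : ℂ) ≠ 0 := by exact_mod_cast hr.ne'
    field_simp
    ring
  simp_rw [key]
  rw [MeasureTheory.integral_finsetSum]
  swap
  · intro ω _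
    exact (integrable_cexp_quadratic' hbre _ _).const_mul _
  rw [spinNum, Finset.mul_sum]
  refine Finset.sum_congr rfl fun ω _ => ?_
  rw [MeasureTheory.integral_const_mul, integral_cexp_quadratic hbre]
  have e1 : Real.exp (-β * ham K n ω) = Real.exp (-β * ∑ j, ((ω j : ℤ) : ℝ) ^ 2) *
      Real.exp (β * K / n * totalSpin n ω ^ 2) := by
    rw [← Real.exp_add]; congr 1; unfold ham totalSpin; ring
  rw [e1, Complex.ofReal_mul, Complex.ofReal_exp (β * K / n * totalSpin n ω ^ 2)]
  rw [show ∀ a b c e f g : ℂ, a * c * e * (b * f * g) = (a * b) * (c * (e * f * g)) by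
    intros; ring, ← Complex.exp_add, ← Complex.exp_add]
  congr 3
  rw [hb]
  push_cast
  have h1 : (r : ℂ) ≠ 0 := by exact_mod_cast hr.ne'
  have h2 : (n : ℂ) ≠ 0 := by exact_mod_cast hn'.ne'
  have h3 : (β : ℂ) ≠ 0 := by
    exact_mod_cast left_ne_zero_of_mul hK.ne'
  have h4 : (K : ℂ) ≠ 0 := by
    exact_mod_cast right_ne_zero_of_mul hK.ne'
  field_simp
  ring_nf
  simp only [Complex.I_sq]
  ring

open MeasureTheory Filter Topology

lemma pow_ge (m : ℕ) (hm : 2 ≤ m) (he : Even m) (x : ℝ) : x ^ 2 - 1 ≤ x ^ m := by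
  rcases le_or_gt 1 |x| with h | h
  · have := pow_le_pow_right₀ h hm
    rw [he.pow_abs, sq_abs] at this
    linarith
  · have h1 := he.pow_nonneg x
    have : |x| ^ 2 ≤ 1 := pow_le_one₀ (abs_nonneg x) h.le
    rw [sq_abs] at this
    linarith

lemma rpow_r (m : ℕ) (hm : m ≠ 0) (n : ℕ) : ((n : ℝ) ^ ((1 : ℝ) / m)) ^ m = n := by
  rw [one_div, Real.rpow_inv_natCast_pow (Nat.cast_nonneg n) hm]

lemma tendsto_r (m : ℕ) (hm : m ≠ 0) :
    Tendsto (fun n : ℕ => (n : ℝ) ^ ((1 : ℝ) / m)) atTop atTop :=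
  (tendsto_rpow_atTop (by positivity)).comp tendsto_natCast_atTop_atTop

lemma integrable_bound (c : ℝ) (hc : 0 < c) :
    Integrable (fun x : ℝ => Real.exp (-(c * (x ^ 2 - 1)))) := by
  have h := (integrable_exp_neg_mul_sq hc).const_mul (Real.exp c)
  refine h.congr (Eventually.of_forall fun x => ?_)
  simp only
  rw [← Real.exp_add]; congr 1; ring

lemma integrable_lim (L : ℝ) (m : ℕ) (hL : 0 < L) (hm : 2 ≤ m) (he : Even m) :
    Integrable (fun x : ℝ => Real.exp (-(L * x ^ m))) := by
  refine (integrable_bound L hL).mono' (by fun_prop) (Eventually.of_forall fun x => ?_)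
  rw [Real.norm_eq_abs, Real.abs_exp]
  apply Real.exp_le_exp.2
  have := pow_ge m hm he x
  nlinarith

lemma pointwise_lim (β K L : ℝ) (m : ℕ) (hm : m ≠ 0)
    (ho : (fun z => Gfun β K z - L * z ^ m) =o[nhds 0] fun z : ℝ => z ^ m) (x : ℝ) :
    Tendsto (fun n : ℕ => (n : ℝ) * Gfun β K (x / (n : ℝ) ^ ((1 : ℝ) / m))) atTop
      (𝓝 (L * x ^ m)) := by
  have hz : Tendsto (fun n : ℕ => x / (n : ℝ) ^ ((1 : ℝ) / m)) atTop (𝓝 0) :=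
    Tendsto.div_atTop tendsto_const_nhds (tendsto_r m hm)
  have h1 := ho.comp_tendsto hz
  have h2 := (Asymptotics.isBigO_refl (fun n : ℕ => (n : ℝ)) atTop).mul_isLittleO h1
  have hev : ∀ᶠ n : ℕ in atTop, (n : ℝ) * (x / (n : ℝ) ^ ((1 : ℝ) / m)) ^ m = x ^ m := by
    filter_upwards [eventually_gt_atTop 0] with n hn
    rw [div_pow, rpow_r m hm]
    have : (n : ℝ) ≠ 0 := by exact_mod_cast hn.ne'
    field_simp
  have h3 : (fun n : ℕ => (n : ℝ) * Gfun β K (x / (n : ℝ) ^ ((1 : ℝ) / m)) - L * x ^ m)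
      =o[atTop] (fun _ : ℕ => x ^ m) := by
    refine h2.congr' ?_ ?_
    · filter_upwards [hev] with n hn
      simp only [Function.comp]
      rw [← hn]; ring
    · filter_upwards [hev] with n hn
      simpa only [Function.comp] using hn
  have h4 := (h3.trans_isBigO (Asymptotics.isBigO_const_const (x ^ m) (one_ne_zero (α := ℝ)) atTop))
  rw [Asymptotics.isLittleO_one_iff] at h4
  simpa using h4.add_const (L * x ^ m)

lemma dom (β K c : ℝ) (m : ℕ) (hm : 2 ≤ m) (he : Even m) (hc : 0 < c)
    (hb : ∀ z, c * min (z ^ m) (z ^ 2) ≤ Gfun β K z) (n : ℕ) (hn : 0 < n) (x : ℝ) :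
    c * (x ^ 2 - 1) ≤ n * Gfun β K (x / (n : ℝ) ^ ((1 : ℝ) / m)) := by
  have hn1 : (1 : ℝ) ≤ n := by exact_mod_cast hn
  have hr1 : (1 : ℝ) ≤ (n : ℝ) ^ ((1 : ℝ) / m) := Real.one_le_rpow hn1 (by positivity)
  have hrm := rpow_r m (by omega) n
  set r := (n : ℝ) ^ ((1 : ℝ) / m)
  have hr0 : 0 < r := by linarith
  have h1 := mul_le_mul_of_nonneg_left (hb (x / r)) (by linarith : (0 : ℝ) ≤ n)
  refine le_trans ?_ h1
  rw [mul_left_comm]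
  refine mul_le_mul_of_nonneg_left ?_ hc.le
  rw [mul_min_of_nonneg _ _ (by linarith)]
  refine le_min ?_ ?_
  · rw [div_pow, hrm, mul_div_cancel₀ _ (by linarith)]
    exact pow_ge m hm he x
  · have h2 : r ^ 2 ≤ n := by rw [← hrm]; exact pow_le_pow_right₀ hr1 hm
    rw [div_pow]
    have h3 : x ^ 2 ≤ n * (x ^ 2 / r ^ 2) := by
      rw [← mul_div_assoc, le_div_iff₀ (by positivity)]
      nlinarith [sq_nonneg x]
    linarith

lemma integral_lim (β K L c : ℝ) (m : ℕ) (hm : 2 ≤ m) (he : Even m) (hc : 0 < c)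
    (hb : ∀ z, c * min (z ^ m) (z ^ 2) ≤ Gfun β K z)
    (ho : (fun z => Gfun β K z - L * z ^ m) =o[nhds 0] fun z : ℝ => z ^ m) (u : ℝ) :
    Tendsto (fun n : ℕ => ∫ x : ℝ, Complex.exp (u * x * Complex.I) *
        (Real.exp (-(n * Gfun β K (x / (n : ℝ) ^ ((1 : ℝ) / m)))) : ℂ)) atTop
      (𝓝 (∫ x : ℝ, Complex.exp (u * x * Complex.I) * (Real.exp (-(L * x ^ m)) : ℂ))) := by
  have hG : Continuous (Gfun β K) := (contDiff_G β K 0).continuous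
  refine tendsto_integral_filter_of_dominated_convergence
    (fun x => Real.exp (-(c * (x ^ 2 - 1)))) ?_ ?_ (integrable_bound c hc) ?_
  · refine Eventually.of_forall fun n => Continuous.aestronglyMeasurable ?_
    have : Continuous fun x : ℝ => Gfun β K (x / (n : ℝ) ^ ((1 : ℝ) / m)) :=
      hG.comp (by fun_prop)
    fun_prop
  · filter_upwards [eventually_gt_atTop 0] with n hn
    refine Eventually.of_forall fun x => ?_
    rw [norm_mul, ← Complex.ofReal_mul, Complex.norm_exp_ofReal_mul_I, one_mul, Complex.norm_real,
      Real.norm_eq_abs, Real.abs_exp]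
    exact Real.exp_le_exp.2 (neg_le_neg (dom β K c m hm he hc hb n hn x))
  · refine Eventually.of_forall fun x => ?_
    refine Tendsto.const_mul _ ?_
    refine (Complex.continuous_ofReal.tendsto _).comp ?_
    exact (Real.continuous_exp.tendsto _).comp (pointwise_lim β K L m (by omega) ho x).neg

lemma spinNum_lim (β K L c : ℝ) (m : ℕ) (hm : 3 ≤ m) (he : Even m) (hc : 0 < c) (hL : 0 < L)
    (hK : 0 < β * K)
    (hb : ∀ z, c * min (z ^ m) (z ^ 2) ≤ Gfun β K z)
    (ho : (fun z => Gfun β K z - L * z ^ m) =o[nhds 0] fun z : ℝ => z ^ m) (u : ℝ) :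
    Tendsto (fun n : ℕ => spinNum β K n ((n : ℝ) ^ ((1 : ℝ) / m)) u /
        spinNum β K n ((n : ℝ) ^ ((1 : ℝ) / m)) 0) atTop
      (𝓝 ((∫ x : ℝ, Complex.exp (u * x * Complex.I) * (Real.exp (-(L * x ^ m)) : ℂ)) /
        ((∫ x : ℝ, Real.exp (-(L * x ^ m)) : ℝ) : ℂ))) := by
  have hu := integral_lim β K L c m (by omega) he hc hb ho u
  have h0 := integral_lim β K L c m (by omega) he hc hb ho 0
  have hZ : 0 < ∫ x : ℝ, Real.exp (-(L * x ^ m)) :=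
    integral_exp_pos (integrable_lim L m hL (by omega) he)
  have e0 : (∫ x : ℝ, Complex.exp ((0 : ℝ) * x * Complex.I) * (Real.exp (-(L * x ^ m)) : ℂ))
      = ((∫ x : ℝ, Real.exp (-(L * x ^ m)) : ℝ) : ℂ) := by
    rw [← integral_complex_ofReal]; simp
  rw [e0] at h0
  have hr : Tendsto (fun n : ℕ => ((n : ℝ) ^ ((1 : ℝ) / m)) ^ 2 / n) atTop (𝓝 0) := by
    have h1 : Tendsto (fun n : ℕ => (n : ℝ) ^ (-(1 - 2 / (m : ℝ)))) atTop (𝓝 0) := by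
      refine (tendsto_rpow_neg_atTop ?_).comp tendsto_natCast_atTop_atTop
      have : (3 : ℝ) ≤ m := by exact_mod_cast hm
      rw [sub_pos, div_lt_one (by linarith)]; linarith
    refine h1.congr' ?_
    filter_upwards [eventually_gt_atTop 0] with n hn
    have hn' : (0 : ℝ) < n := by exact_mod_cast hn
    rw [← Real.rpow_natCast, ← Real.rpow_mul hn'.le]
    conv_rhs => rw [← Real.rpow_one (n : ℝ), ← Real.rpow_mul hn'.le, ← Real.rpow_sub hn']
    congr 1
    push_cast
    ring
  have hE : Tendsto (fun n : ℕ => Complex.exp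
      ((u ^ 2 * (((n : ℝ) ^ ((1 : ℝ) / m)) ^ 2 / n) / (4 * (β * K)) : ℝ) : ℂ)) atTop (𝓝 1) := by
    have := ((hr.const_mul (u ^ 2)).div_const (4 * (β * K)))
    simp only [mul_zero, zero_div] at this
    have h2 := (Complex.continuous_exp.tendsto _).comp
      ((Complex.continuous_ofReal.tendsto _).comp this)
    rw [Complex.ofReal_zero, Complex.exp_zero] at h2
    exact h2
  have hfin := hE.mul (hu.div h0 (by exact_mod_cast hZ.ne'))
  rw [one_mul] at hfin
  refine hfin.congr' ?_
  filter_upwards [eventually_gt_atTop 0] with n hn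
  have hn' : (0 : ℝ) < n := by exact_mod_cast hn
  obtain ⟨C, hC, hI⟩ := HS β K n ((n : ℝ) ^ ((1 : ℝ) / m)) hn (by positivity) hK
  simp only [Pi.div_apply]
  rw [hI u, hI 0, Complex.exp_neg]
  have hx := Complex.exp_ne_zero
      ((u ^ 2 * (((n : ℝ) ^ ((1 : ℝ) / m)) ^ 2 / n) / (4 * (β * K)) : ℝ) : ℂ)
  set E := Complex.exp
      ((u ^ 2 * (((n : ℝ) ^ ((1 : ℝ) / m)) ^ 2 / n) / (4 * (β * K)) : ℝ) : ℂ)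
  have : Complex.exp (-((0 ^ 2 * (((n : ℝ) ^ ((1 : ℝ) / m)) ^ 2 / n) / (4 * (β * K)) : ℝ) : ℂ))
    = 1 := by simp
  rw [this]
  field_simp

lemma part_pos (β K : ℝ) (n : ℕ) : 0 < ∑ ω : Fin n → Spin, Real.exp (-β * ham K n ω) := by
  have : Nonempty (Fin n → Spin) := ⟨fun _ => ⟨0, by decide⟩⟩
  exact Finset.sum_pos (fun _ _ => Real.exp_pos _) Finset.univ_nonempty

lemma spinNum_zero (β K : ℝ) (n : ℕ) (r : ℝ) :
    spinNum β K n r 0 = ((∑ ω : Fin n → Spin, Real.exp (-β * ham K n ω) : ℝ) : ℂ) := by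
  unfold spinNum; simp

def spinLaw (β K : ℝ) (e : ℝ) (n : ℕ) : Measure ℝ :=
  ∑ ω : Fin n → Spin, ENNReal.ofReal (canonP β K n ω) •
    Measure.dirac (totalSpin n ω / (n : ℝ) ^ e)

lemma canonP_nonneg (β K : ℝ) (n : ℕ) (ω : Fin n → Spin) : 0 ≤ canonP β K n ω :=
  div_nonneg (Real.exp_pos _).le (part_pos β K n).le

lemma canonP_sum (β K : ℝ) (n : ℕ) : ∑ ω : Fin n → Spin, canonP β K n ω = 1 := by
  unfold canonP
  rw [← Finset.sum_div, div_self (part_pos β K n).ne']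

instance (β K e : ℝ) (n : ℕ) : IsProbabilityMeasure (spinLaw β K e n) := by
  constructor
  unfold spinLaw
  simp only [Measure.coe_finsetSum, Finset.sum_apply, Measure.smul_apply, measure_univ,
    smul_eq_mul, mul_one]
  rw [← ENNReal.ofReal_sum_of_nonneg (fun ω _ => canonP_nonneg β K n ω), canonP_sum]
  simp

lemma integral_spinLaw {E : Type*} [NormedAddCommGroup E] [NormedSpace ℝ E] [CompleteSpace E]
    (β K e : ℝ) (n : ℕ) (g : ℝ → E) :
    ∫ x, g x ∂(spinLaw β K e n) =
      ∑ ω : Fin n → Spin, canonP β K n ω • g (totalSpin n ω / (n : ℝ) ^ e) := by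
  unfold spinLaw
  rw [integral_finsetSum_measure]
  · refine Finset.sum_congr rfl fun ω _ => ?_
    rw [integral_smul_measure, integral_dirac, ENNReal.toReal_ofReal (canonP_nonneg β K n ω)]
  · intro ω _
    exact (integrable_dirac (by finiteness)).smul_measure (by finiteness)

def limLaw (L : ℝ) (m : ℕ) : Measure ℝ :=
  volume.withDensity (fun x : ℝ => ENNReal.ofReal
    (Real.exp (-(L * x ^ m)) / ∫ x : ℝ, Real.exp (-(L * x ^ m))))

lemma integral_limLaw {E : Type*} [NormedAddCommGroup E] [NormedSpace ℝ E]
    (L : ℝ) (m : ℕ) (g : ℝ → E) :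
    ∫ x, g x ∂(limLaw L m) =
      ∫ x, (Real.exp (-(L * x ^ m)) / ∫ x : ℝ, Real.exp (-(L * x ^ m))) • g x := by
  unfold limLaw
  rw [integral_withDensity_eq_integral_toReal_smul (by fun_prop) (by simp)]
  refine integral_congr_ae (Eventually.of_forall fun x => ?_)
  simp only
  rw [ENNReal.toReal_ofReal]
  exact div_nonneg (Real.exp_pos _).le (integral_nonneg fun _ => (Real.exp_pos _).le)

lemma limLaw_prob (L : ℝ) (m : ℕ) (hL : 0 < L) (hm : 2 ≤ m) (he : Even m) :
    IsProbabilityMeasure (limLaw L m) := by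
  have hi := integrable_lim L m hL hm he
  have hZ : 0 < ∫ x : ℝ, Real.exp (-(L * x ^ m)) := integral_exp_pos hi
  constructor
  unfold limLaw
  rw [withDensity_apply _ MeasurableSet.univ, Measure.restrict_univ,
    ← ofReal_integral_eq_lintegral_ofReal (hi.div_const _)
      (Eventually.of_forall fun x => div_nonneg (Real.exp_pos _).le hZ.le),
    integral_div, div_self hZ.ne', ENNReal.ofReal_one]

lemma core (β K L : ℝ) (m : ℕ) (hm : 3 ≤ m) (he : Even m) (hL : 0 < L)
    (hq : 1 / 4 ≤ Real.exp (-β)) (hA : 2 * β * K = 1 / ww β 0)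
    (ho : (fun z => Gfun β K z - L * z ^ m) =o[nhds 0] fun z : ℝ => z ^ m)
    (e : ℝ) (hee : e = 1 - 1 / m) (f : ℝ → ℝ) (hf : Continuous f)
    (hfb : ∃ C : ℝ, ∀ x, |f x| ≤ C) :
    Tendsto (fun n : ℕ => ∑ ω : Fin n → Spin, canonP β K n ω *
        f (totalSpin n ω / (n : ℝ) ^ e)) atTop
      (𝓝 ((∫ x : ℝ, f x * Real.exp (-(L * x ^ m))) / ∫ x : ℝ, Real.exp (-(L * x ^ m)))) := by
  obtain ⟨c, hc, hb⟩ := boundG β K L m he hq hA hL ho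
  have hw := ww_pos β
  have hK : 0 < β * K := by
    have : 0 < 2 * β * K := by rw [hA]; positivity
    linarith
  have := limLaw_prob L m hL (by omega) he
  let μ : ℕ → ProbabilityMeasure ℝ := fun n => ⟨spinLaw β K e n, inferInstance⟩
  let μ0 : ProbabilityMeasure ℝ := ⟨limLaw L m, inferInstance⟩
  have hconv : Tendsto μ atTop (𝓝 μ0) := by
    apply ProbabilityMeasure.tendsto_of_tendsto_charFun
    intro u
    have h := spinNum_lim β K L c m hm he hc hL hK hb ho u
    have e0 : charFun (μ0 : Measure ℝ) u =
        (∫ x : ℝ, Complex.exp (u * x * Complex.I) * (Real.exp (-(L * x ^ m)) : ℂ)) /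
        ((∫ x : ℝ, Real.exp (-(L * x ^ m)) : ℝ) : ℂ) := by
      rw [charFun_apply_real]
      change ∫ x, Complex.exp (u * x * Complex.I) ∂(limLaw L m) = _
      rw [integral_limLaw, ← integral_div]
      refine integral_congr_ae (Eventually.of_forall fun x => ?_)
      simp only [Complex.real_smul, Complex.ofReal_div]
      ring
    rw [e0]
    refine h.congr' ?_
    filter_upwards [eventually_gt_atTop 0] with n hn
    have hn' : (0 : ℝ) < n := by exact_mod_cast hn
    rw [charFun_apply_real]
    change _ = ∫ x, Complex.exp (u * x * Complex.I) ∂(spinLaw β K e n)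
    rw [integral_spinLaw, spinNum_zero, spinNum, Finset.sum_div]
    refine Finset.sum_congr rfl fun ω _ => ?_
    have e1 : totalSpin n ω * (n : ℝ) ^ ((1 : ℝ) / m) / n = totalSpin n ω / (n : ℝ) ^ e := by
      rw [hee, Real.rpow_sub hn', Real.rpow_one]
      field_simp
    rw [e1, canonP, Complex.real_smul, Complex.ofReal_div (Real.exp _)]
    ring
  obtain ⟨C, hC⟩ := hfb
  have h := (ProbabilityMeasure.tendsto_iff_forall_integral_tendsto.1 hconv)
    (BoundedContinuousFunction.ofNormedAddCommGroup f hf C hC)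
  have e0 : ∫ x, f x ∂(limLaw L m) =
      (∫ x : ℝ, f x * Real.exp (-(L * x ^ m))) / ∫ x : ℝ, Real.exp (-(L * x ^ m)) := by
    rw [integral_limLaw, ← integral_div]
    refine integral_congr_ae (Eventually.of_forall fun x => ?_)
    simp only [smul_eq_mul]
    ring
  have e1 : ∀ n, ∫ x, f x ∂(spinLaw β K e n) = ∑ ω : Fin n → Spin, canonP β K n ω *
        f (totalSpin n ω / (n : ℝ) ^ e) := by
    intro n; rw [integral_spinLaw]; simp
  rw [← e0]
  simp_rw [← e1]
  exact h

/-- (i) For `0 < β < log 4` and `K = K_c^{(2)}(β)`, the distributions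
of `S_n/n^{3/4}` under `P_{n,β,K}` converge weakly to the distribution with density
proportional to `exp(−G_{β,K}⁽⁴⁾(0) x⁴/4!)`, where
`G_{β,K}⁽⁴⁾(0) = −(2βK)⁴ c_β⁽⁴⁾(0) > 0`.  (ii) For `β = log 4` and `K = K_c^{(2)}(β)`,
the distributions of `S_n/n^{5/6}` converge weakly to the distribution with density
proportional to `exp(−G_{β,K}⁽⁶⁾(0) x⁶/6!)`, where `G_{β,K}⁽⁶⁾(0) = 2(2βK)⁶/9`. -/
theorem nonclassical_limit_total_spin :
    (∀ β K : ℝ, 0 < β → β < Real.log 4 → K = Kc2 β →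
      (iteratedDeriv 4 (Gfun β K) 0 =
          -(2 * β * K) ^ 4 * iteratedDeriv 4 (cBeta β) 0 ∧
        0 < iteratedDeriv 4 (Gfun β K) 0) ∧
      ∀ f : ℝ → ℝ, Continuous f → (∃ C : ℝ, ∀ x, |f x| ≤ C) →
        Filter.Tendsto (fun n : ℕ =>
            ∑ ω : Fin n → Spin, canonP β K n ω *
              f (totalSpin n ω / (n : ℝ) ^ ((3 : ℝ) / 4)))
          Filter.atTop
          (nhds ((∫ x : ℝ, f x *
              Real.exp (-(iteratedDeriv 4 (Gfun β K) 0) * x ^ 4 / (Nat.factorial 4))) /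
            (∫ x : ℝ,
              Real.exp (-(iteratedDeriv 4 (Gfun β K) 0) * x ^ 4 / (Nat.factorial 4)))))) ∧
    (∀ β K : ℝ, β = Real.log 4 → K = Kc2 β →
      (iteratedDeriv 6 (Gfun β K) 0 = 2 * (2 * β * K) ^ 6 / 9 ∧
        0 < iteratedDeriv 6 (Gfun β K) 0) ∧
      ∀ f : ℝ → ℝ, Continuous f → (∃ C : ℝ, ∀ x, |f x| ≤ C) →
        Filter.Tendsto (fun n : ℕ =>
            ∑ ω : Fin n → Spin, canonP β K n ω *
              f (totalSpin n ω / (n : ℝ) ^ ((5 : ℝ) / 6)))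
          Filter.atTop
          (nhds ((∫ x : ℝ, f x *
              Real.exp (-(iteratedDeriv 6 (Gfun β K) 0) * x ^ 6 / (Nat.factorial 6))) /
            (∫ x : ℝ,
              Real.exp (-(iteratedDeriv 6 (Gfun β K) 0) * x ^ 6 / (Nat.factorial 6)))))) := by
  refine ⟨?_, ?_⟩
  · intro β K hβ hβ4 hK
    have hq : 1 / 4 < Real.exp (-β) := by
      rw [Real.exp_neg, one_div]
      apply inv_strictAnti₀ (Real.exp_pos _)
      rwa [← Real.lt_log_iff_exp_lt (by norm_num)]
    have hw := ww_pos β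
    have hA : 2 * β * K = 1 / ww β 0 := by rw [hK]; exact Kc_val β hβ
    have hw3 : 1 < 3 * ww β 0 := by
      rw [ww_zero, ← mul_div_assoc, one_lt_div (by positivity)]; linarith
    have hpos : 0 < iteratedDeriv 4 (Gfun β K) 0 := by
      rw [iterG4', hA]
      have : 0 < 3 * ww β 0 - 1 := by linarith
      positivity
    refine ⟨⟨iterG4 β K, hpos⟩, ?_⟩
    intro f hf hfb
    have ho := taylorG β K _ 4 (by rw [hK]; exact iterG_small β hβ) rfl
    have := core β K _ 4 (by norm_num) (by decide) (by positivity) hq.le hA ho (3 / 4)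
      (by norm_num) f hf hfb
    have e : ∀ x : ℝ, -(iteratedDeriv 4 (Gfun β K) 0 / (Nat.factorial 4 : ℝ) * x ^ 4) =
      -(iteratedDeriv 4 (Gfun β K) 0) * x ^ 4 / (Nat.factorial 4 : ℝ) := by intro x; ring
    simp_rw [e] at this
    exact this
  · intro β K hβ hK
    have hβ0 : 0 < β := by rw [hβ]; exact Real.log_pos (by norm_num)
    have hq : Real.exp (-β) = 1 / 4 := by
      rw [Real.exp_neg, hβ, Real.exp_log (by norm_num), one_div]
    have hw : ww β 0 = 1 / 3 := by rw [ww_zero, hq]; norm_num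
    have hA : 2 * β * K = 1 / ww β 0 := by rw [hK]; exact Kc_val β hβ0
    have hval : iteratedDeriv 6 (Gfun β K) 0 = 2 * (2 * β * K) ^ 6 / 9 := by
      rw [iterG6, hw]; ring
    have hpos : 0 < iteratedDeriv 6 (Gfun β K) 0 := by
      rw [hval, hA, hw]; norm_num
    refine ⟨⟨hval, hpos⟩, ?_⟩
    intro f hf hfb
    have h6 : ∀ k < 6, iteratedDeriv k (Gfun β K) 0 = 0 := by
      intro k hk
      rcases lt_or_ge k 4 with h | h
      · rw [hK]; exact iterG_small β hβ0 k h
      · interval_cases k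
        · rw [iterG4', hw]; norm_num
        · exact iterG5 β K
    have ho := taylorG β K _ 6 h6 rfl
    have := core β K _ 6 (by norm_num) (by decide) (by positivity) hq.ge hA ho (5 / 6)
      (by norm_num) f hf hfb
    have e : ∀ x : ℝ, -(iteratedDeriv 6 (Gfun β K) 0 / (Nat.factorial 6 : ℝ) * x ^ 6) =
      -(iteratedDeriv 6 (Gfun β K) 0) * x ^ 6 / (Nat.factorial 6 : ℝ) := by intro x; ring
    simp_rw [e] at this
    exact this
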